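/- For all even natural numbers m,n with m,n ≥ 4, the integral ∫_ℝ μ_m(x)·μ_n(x)·e^{−x²}/(1+2x²)² dx equals √π·n·(n−1)(n−2)·(∏_{j=1}^{(n−4)/2}(n − 2(1+j)))² / (n−1)! if m = n, and equals 0 if m ≠ n; moreover ∫_ℝ (μ_0(x))²·e^{−x²}/(1+2x²)² dx = √π/2. -/

import Mathlib

/-- Even coefficients c_{2k}(n) of the generalized power series. -/
noncomputable def ceven (n k : ℕ) : ℂ :=
  if k = 0 then 1
  else if k = 1 then -(n : ℂ)
  else (-1) ^ k * 2 ^ k * (n : ℂ) * ((n : ℂ) - ((2 * (k : ℂ) - 1) ^ 2 + 1)) *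
    (∏ j ∈ Finset.Icc 1 (k - 2), ((n : ℂ) - 2 * (1 + (j : ℂ)))) /
      (Nat.factorial (2 * k) : ℂ)

/-- Odd coefficients: `codd n k` is c_{2k-1}(n), for k ≥ 1. -/
noncomputable def codd (n k : ℕ) : ℂ :=
  if k ≤ 1 then 1
  else (-1) ^ (k + 1) * 2 ^ (k - 1) * ((n : ℂ) - ((2 * ((k : ℂ) - 1)) ^ 2 + 1)) *
    (∏ j ∈ Finset.Icc 1 (k - 2), ((n : ℂ) - (2 * (1 + (j : ℂ)) - 1))) /
      (Nat.factorial (2 * k - 1) : ℂ)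

/-- μₙ(z) = Σ_{k≥0} c_{2k}(n)·z^{2k}. -/
noncomputable def muF (n : ℕ) (z : ℂ) : ℂ := ∑' k : ℕ, ceven n k * z ^ (2 * k)

/-- νₙ(z) = Σ_{k≥1} c_{2k-1}(n)·z^{2k-1}. -/
noncomputable def nuF (n : ℕ) (z : ℂ) : ℂ := ∑' k : ℕ, codd n (k + 1) * z ^ (2 * k + 1)

/-- βₙ = μₙ + νₙ. -/
noncomputable def betaF (n : ℕ) (z : ℂ) : ℂ := muF n z + nuF n z

open Polynomial MeasureTheory in
theorem aux_int_poly (P : ℝ[X]) : Integrable (fun x : ℝ => P.eval x * Real.exp (-x ^ 2)) := by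
  induction P using Polynomial.induction_on' with
  | add p q hp hq =>
    refine (hp.add hq).congr (Filter.Eventually.of_forall fun x => ?_)
    simp [add_mul]
  | monomial k a =>
    have h := integrable_rpow_mul_exp_neg_mul_sq (b := 1) one_pos (s := (k : ℝ))
      (by have : (0 : ℝ) ≤ k := Nat.cast_nonneg k
          linarith)
    refine (h.const_mul a).congr (Filter.Eventually.of_forall fun x => ?_)
    simp [mul_assoc]

open Polynomial in
/-- Gaussian functional. -/
noncomputable def gI (P : ℝ[X]) : ℝ := ∫ x : ℝ, P.eval x * Real.exp (-x ^ 2)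

open Polynomial MeasureTheory in
theorem gI_add (P Q : ℝ[X]) : gI (P + Q) = gI P + gI Q := by
  unfold gI
  rw [← integral_add (aux_int_poly P) (aux_int_poly Q)]
  simp [add_mul]

open Polynomial MeasureTheory in
theorem gI_smul (a : ℝ) (Q : ℝ[X]) : gI (C a * Q) = a * gI Q := by
  unfold gI
  rw [← integral_const_mul]
  simp [mul_assoc]

theorem aux_hasDeriv_exp (x : ℝ) :
    HasDerivAt (fun x : ℝ => Real.exp (-x ^ 2)) (Real.exp (-x ^ 2) * (-(2 * x))) x := by
  have := ((hasDerivAt_pow 2 x).neg).exp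
  simpa using this

open Polynomial MeasureTheory in
theorem gI_deriv (P : ℝ[X]) : gI (derivative P - 2 * X * P) = 0 := by
  unfold gI
  apply integral_eq_zero_of_hasDerivAt_of_integrable (f := fun x => P.eval x * Real.exp (-x ^ 2))
  · intro x
    have := (P.hasDerivAt x).mul (aux_hasDeriv_exp x)
    refine this.congr_deriv ?_
    simp
    ring
  · exact aux_int_poly _
  · exact aux_int_poly _

open Polynomial in
/-- Normalised Hermite pairs (even, odd). -/
noncomputable def EY : ℕ → ℝ[X] × ℝ[X]
  | 0 => (1, X)
  | (r + 1) =>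
    let E := (EY r).1 - 2 * X * (EY r).2
    (E, C ((2 * (2 * (r : ℝ) + 3))⁻¹) * (2 * X * E + C (4 * ((r : ℝ) + 1)) * (EY r).2))

open Polynomial

theorem EY_E (r : ℕ) : (EY (r + 1)).1 = (EY r).1 - 2 * X * (EY r).2 := rfl

theorem EY_Y (r : ℕ) : C (2 * (2 * (r : ℝ) + 3)) * (EY (r + 1)).2
    = 2 * X * (EY (r + 1)).1 + C (4 * ((r : ℝ) + 1)) * (EY r).2 := by
  have h : (2 * (2 * (r : ℝ) + 3)) ≠ 0 := by positivity
  change C _ * (C _ * _) = _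
  rw [← mul_assoc, ← C_mul, mul_inv_cancel₀ h, C_1, one_mul]
  rfl

theorem EY_deriv (r : ℕ) : derivative (EY r).2 = (EY r).1 ∧
    derivative (EY (r + 1)).1 = - C (4 * ((r : ℝ) + 1)) * (EY r).2 ∧
    derivative (EY r).1 = 2 * X * (EY r).1 - C (2 * (2 * (r : ℝ) + 1)) * (EY r).2 := by
  induction r with
  | zero =>
    refine ⟨by simp [EY], ?_, ?_⟩
    · simp [EY]
      rw [show (C (4:ℝ)) = 4 from rfl]; ring
    · simp [EY]
      rw [show (C (2:ℝ)) = 2 from rfl]; ring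
  | succ r ih =>
    obtain ⟨h1, h2, h3⟩ := ih
    have hY := EY_Y r
    have hE := EY_E r
    have a1 : derivative (EY (r + 1)).2 = (EY (r + 1)).1 := by
      have h := congrArg derivative hY
      simp only [derivative_mul, derivative_C, derivative_add, derivative_X, h1, h2,
        derivative_ofNat] at h
      have hne : (C (2 * (2 * (r : ℝ) + 3))) ≠ (0 : ℝ[X]) := by
        rw [Ne, C_eq_zero]; positivity
      apply mul_left_cancel₀ hne
      simp only [C_mul, C_add, map_ofNat, map_natCast, C_1] at h ⊢
      rw [hE] at h ⊢
      linear_combination h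
    have a3 : derivative (EY (r + 1)).1 = 2 * X * (EY (r + 1)).1
        - C (2 * (2 * ((r + 1 : ℕ) : ℝ) + 1)) * (EY (r + 1)).2 := by
      rw [h2]
      push_cast
      simp only [C_mul, C_add, map_ofNat, map_natCast, C_1] at hY ⊢
      linear_combination hY
    refine ⟨a1, ?_, a3⟩
    rw [EY_E (r + 1)]
    simp only [derivative_mul, derivative_sub, derivative_X, a1, a3, derivative_ofNat]
    push_cast
    simp only [C_mul, C_add, map_ofNat, map_natCast, C_1]
    ring

theorem gI_sub (P Q : ℝ[X]) : gI (P - Q) = gI P - gI Q := by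
  have : P - Q = P + C (-1) * Q := by simp [sub_eq_add_neg]
  rw [this, gI_add, gI_smul]; ring

theorem gI_one : gI 1 = Real.sqrt Real.pi := by
  have := integral_gaussian 1
  simpa [gI] using this

theorem gI_YE (r : ℕ) : gI ((EY r).1 ^ 2) = 2 * (2 * (r : ℝ) + 1) * gI ((EY r).2 ^ 2) := by
  obtain ⟨h1, h2, h3⟩ := EY_deriv r
  have h := gI_deriv ((EY r).2 * (EY r).1)
  rw [derivative_mul, h1, h3,
    show (EY r).1 * (EY r).1 + (EY r).2 * (2 * X * (EY r).1 - C (2 * (2 * (r : ℝ) + 1)) * (EY r).2)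
      - 2 * X * ((EY r).2 * (EY r).1) = (EY r).1 ^ 2 - C (2 * (2 * (r : ℝ) + 1)) * (EY r).2 ^ 2
      by ring, gI_sub, gI_smul] at h
  linarith

theorem gI_EY (r : ℕ) : gI ((EY (r + 1)).1 ^ 2) = 4 * ((r : ℝ) + 1) * gI ((EY r).2 ^ 2) := by
  obtain ⟨h1, h2, h3⟩ := EY_deriv r
  have h := gI_deriv ((EY r).2 * (EY (r + 1)).1)
  rw [derivative_mul, h1, h2,
    show (EY r).1 * (EY (r + 1)).1 + (EY r).2 * (- C (4 * ((r : ℝ) + 1)) * (EY r).2)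
      - 2 * X * ((EY r).2 * (EY (r + 1)).1)
      = (EY (r + 1)).1 ^ 2 - C (4 * ((r : ℝ) + 1)) * (EY r).2 ^ 2
      by rw [EY_E r]; ring, gI_sub, gI_smul] at h
  linarith

theorem gI_YY_zero : gI ((EY 0).2 ^ 2) = Real.sqrt Real.pi / 2 := by
  have := gI_YE 0
  have h : (EY 0).1 ^ 2 = 1 := by simp [EY]
  rw [h, gI_one] at this
  push_cast at this
  linarith

theorem gI_YY_succ (r : ℕ) : gI ((EY (r + 1)).2 ^ 2)
    = (2 * (r : ℝ) + 2) / (2 * r + 3) * gI ((EY r).2 ^ 2) := by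
  have h1 := gI_YE (r + 1)
  rw [gI_EY] at h1
  push_cast at h1
  field_simp
  linarith

theorem gI_orth (r s : ℕ) (h : r ≠ s) : gI ((EY r).2 * (EY s).2) = 0 := by
  obtain ⟨h1, -, h3⟩ := EY_deriv r
  obtain ⟨k1, -, k3⟩ := EY_deriv s
  have key := gI_deriv ((EY r).1 * (EY s).2 - (EY r).2 * (EY s).1)
  rw [derivative_sub, derivative_mul, derivative_mul, h1, h3, k1, k3,
    show (2 * X * (EY r).1 - C (2 * (2 * (r : ℝ) + 1)) * (EY r).2) * (EY s).2
      + (EY r).1 * (EY s).1 - ((EY r).1 * (EY s).1 + (EY r).2 *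
      (2 * X * (EY s).1 - C (2 * (2 * (s : ℝ) + 1)) * (EY s).2))
      - 2 * X * ((EY r).1 * (EY s).2 - (EY r).2 * (EY s).1)
      = C (2 * (2 * (s : ℝ) + 1) - 2 * (2 * (r : ℝ) + 1)) * ((EY r).2 * (EY s).2)
      by rw [C_sub]; ring, gI_smul] at key
  rcases mul_eq_zero.1 key with h0 | h0
  · exact absurd (by have : (r : ℝ) = s := by linarith
                     exact_mod_cast this) h
  · exact h0

/-- The polynomial form of `muF (2r+4)`. -/
noncomputable def MP (r : ℕ) : ℝ[X] :=
  (1 + 2 * X ^ 2) * (EY r).1 - (4 * X + 2 * X * (1 + 2 * X ^ 2)) * (EY r).2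

theorem MP_deriv (r : ℕ) :
    derivative (MP r) = - C (2 * (2 * (r : ℝ) + 4)) * ((1 + 2 * X ^ 2) * (EY r).2) := by
  obtain ⟨h1, -, h3⟩ := EY_deriv r
  unfold MP
  simp only [derivative_mul, derivative_sub, derivative_add, derivative_X, derivative_ofNat,
    derivative_X_pow, derivative_one, h1, h3]
  simp only [C_mul, C_add, map_ofNat, map_natCast, C_1]
  push_cast
  ring

theorem aux_int_q (P : ℝ[X]) (k : ℕ) : MeasureTheory.Integrable
    (fun x : ℝ => P.eval x * Real.exp (-x ^ 2) / (1 + 2 * x ^ 2) ^ k) := by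
  have hne : ∀ x : ℝ, (1 + 2 * x ^ 2) ^ k ≠ 0 := fun x => by positivity
  refine (aux_int_poly P).mono ?_ (Filter.Eventually.of_forall fun x => ?_)
  · apply Continuous.aestronglyMeasurable
    refine Continuous.div ?_ (by fun_prop) hne
    exact P.continuous.mul (by fun_prop)
  · rw [norm_div]
    apply div_le_self (norm_nonneg _)
    rw [Real.norm_of_nonneg (by positivity)]
    exact one_le_pow₀ (by nlinarith [sq_nonneg x])

theorem real_int (r s : ℕ) :
    ∫ x : ℝ, (MP r).eval x * (MP s).eval x * Real.exp (-x ^ 2) / (1 + 2 * x ^ 2) ^ 2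
      = 2 * (2 * (r : ℝ) + 4) * gI ((EY r).2 * (EY s).2) := by
  have e1 : ∀ x : ℝ, (derivative (MP r)).eval x
      = - (2 * (2 * (r : ℝ) + 4)) * ((1 + 2 * x ^ 2) * (EY r).2.eval x) := by
    intro x; rw [MP_deriv]; simp
  have e2 : ∀ x : ℝ, (MP s).eval x
      = (1 + 2 * x ^ 2) * (derivative (EY s).2).eval x
        - (4 * x + 2 * x * (1 + 2 * x ^ 2)) * (EY s).2.eval x := by
    intro x; rw [(EY_deriv s).1]; simp [MP]
  have i1 := aux_int_q (MP r * MP s) 2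
  have i2 := aux_int_poly (C (2 * (2 * (r : ℝ) + 4)) * ((EY r).2 * (EY s).2))
  have key := MeasureTheory.integral_eq_zero_of_hasDerivAt_of_integrable
    (f := fun x : ℝ => (MP r * (EY s).2).eval x * Real.exp (-x ^ 2) / (1 + 2 * x ^ 2) ^ 1)
    (f' := fun x : ℝ => (MP r * MP s).eval x * Real.exp (-x ^ 2) / (1 + 2 * x ^ 2) ^ 2
      - (C (2 * (2 * (r : ℝ) + 4)) * ((EY r).2 * (EY s).2)).eval x * Real.exp (-x ^ 2))
    (fun x => by
      have hq : HasDerivAt (fun x : ℝ => (1 + 2 * x ^ 2) ^ 1) (4 * x) x := by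
        have := ((hasDerivAt_pow 2 x).const_mul 2).const_add 1
        simp only [pow_one]
        refine this.congr_deriv ?_
        norm_num
        ring
      have hne : (1 + 2 * x ^ 2) ^ 1 ≠ 0 := by positivity
      have hne' : (1 + 2 * x ^ 2) ≠ 0 := by positivity
      have := (((MP r * (EY s).2).hasDerivAt x).mul (aux_hasDeriv_exp x)).div hq hne
      refine this.congr_deriv ?_
      simp only [derivative_mul, eval_add, eval_mul, e1, eval_C, Pi.mul_apply]
      rw [e2 x]
      field_simp
      ring)
    (i1.sub i2) (aux_int_q _ 1)
  rw [MeasureTheory.integral_sub i1 i2] at key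
  have h2 := gI_smul (2 * (2 * (r : ℝ) + 4)) ((EY r).2 * (EY s).2)
  unfold gI at h2 ⊢
  rw [h2] at key
  simp only [eval_mul] at key ⊢
  linarith

theorem gI_YY_closed (r : ℕ) : gI ((EY r).2 ^ 2) =
    Real.sqrt Real.pi * ((2 * (r : ℝ) + 3) * (2 * r + 2)) *
      (∏ j ∈ Finset.Icc 1 r, ((2 * (r : ℝ) + 4) - 2 * (1 + (j : ℝ)))) ^ 2 /
        (2 * (Nat.factorial (2 * r + 3) : ℝ)) := by
  have hp : ∀ r : ℕ, (∏ j ∈ Finset.Icc 1 r, ((2 * (r : ℝ) + 4) - 2 * (1 + (j : ℝ))))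
      = 2 ^ r * (Nat.factorial r : ℝ) := by
    intro r
    have : ∀ j ∈ Finset.Icc 1 r, ((2 * (r : ℝ) + 4) - 2 * (1 + (j : ℝ)))
        = 2 * ((r + 1 - j : ℕ) : ℝ) := by
      intro j hj
      rw [Finset.mem_Icc] at hj
      rw [Nat.cast_sub (by omega)]
      push_cast; ring
    rw [Finset.prod_congr rfl this, Finset.prod_mul_distrib, ← Nat.cast_prod]
    congr 1
    · simp
    · congr 1
      rw [← Finset.prod_range_add_one_eq_factorial r]
      refine Finset.prod_nbij' (fun i => r - i) (fun i => r - i) ?_ ?_ ?_ ?_ ?_ <;>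
        intro i hi <;> simp only [Finset.mem_Icc, Finset.mem_range] at hi ⊢ <;> omega
  rw [hp]
  induction r with
  | zero => rw [gI_YY_zero]; norm_num [Nat.factorial]; ring
  | succ r ih =>
    rw [gI_YY_succ, ih]
    rw [show 2 * (r + 1) + 3 = (2 * r + 3) + 1 + 1 by ring, Nat.factorial_succ (2 * r + 3 + 1),
      Nat.factorial_succ (2 * r + 3), Nat.factorial_succ r]
    have : (Nat.factorial (2 * r + 3) : ℝ) ≠ 0 := by positivity
    push_cast
    field_simp
    ring

theorem Y_coeff (r k : ℕ) : ((k : ℝ) + 2) * (k + 1) * (EY r).2.coeff (k + 2)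
    = (2 * k - 2 * (2 * (r : ℝ) + 1)) * (EY r).2.coeff k := by
  obtain ⟨h1, -, h3⟩ := EY_deriv r
  rw [← h1] at h3
  have h := congrArg (fun p => p.coeff k) h3
  simp only [coeff_sub, coeff_C_mul, mul_assoc, coeff_ofNat_mul] at h
  rw [coeff_derivative, coeff_derivative] at h
  rcases k with _ | k
  · simp at h ⊢; linarith
  · rw [coeff_X_mul, coeff_derivative] at h
    push_cast at h ⊢
    linarith

theorem Y_zero (r : ℕ) : (EY r).2.coeff 0 = 0 ∧ (EY r).2.coeff 1 = 1 := by
  have hE : ∀ r, (EY r).1.coeff 0 = 1 := by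
    intro r
    induction r with
    | zero => simp [EY]
    | succ r ih => rw [EY_E]; simp [ih, mul_assoc]
  constructor
  · induction r with
    | zero => simp [EY]
    | succ r ih =>
      have h := congrArg (fun p => p.coeff 0) (EY_Y r)
      simp only [mul_assoc, coeff_add, coeff_C_mul, coeff_ofNat_mul, ih, coeff_X_mul_zero,
        mul_zero, add_zero] at h
      have hne : (2 * (2 * (r : ℝ) + 3)) ≠ 0 := by positivity
      rw [← mul_assoc] at h
      exact (mul_eq_zero.1 h).resolve_left hne
  · have h := congrArg (fun p => p.coeff 0) (EY_deriv r).1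
    simp only [coeff_derivative, hE] at h
    simpa using h

theorem Y_even (r k : ℕ) : (EY r).2.coeff (2 * k) = 0 := by
  induction k with
  | zero => exact (Y_zero r).1
  | succ k ih =>
    have := Y_coeff r (2 * k)
    rw [ih, mul_zero] at this
    rw [show 2 * (k + 1) = 2 * k + 2 by ring]
    refine (mul_eq_zero.1 this).resolve_left ?_
    positivity

theorem Y_odd (r k : ℕ) : (EY r).2.coeff (2 * k + 1) =
    (-2) ^ k * (∏ j ∈ Finset.Icc 1 k, ((2 * (r : ℝ) + 4) - 2 * (1 + (j : ℝ)))) /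
      (Nat.factorial (2 * k + 1) : ℝ) := by
  induction k with
  | zero => simpa using (Y_zero r).2
  | succ k ih =>
    have h := Y_coeff r (2 * k + 1)
    rw [show 2 * (k + 1) + 1 = (2 * k + 1) + 2 by ring,
      Finset.prod_Icc_succ_top (by omega), Nat.factorial_succ (2 * k + 1 + 1),
      Nat.factorial_succ (2 * k + 1)]
    have hne : (((2 * k + 1 : ℕ) : ℝ) + 2) * ((2 * k + 1 : ℕ) + 1) ≠ 0 := by positivity
    apply mul_left_cancel₀ hne
    rw [h, ih]
    have : (Nat.factorial (2 * k + 1) : ℝ) ≠ 0 := by positivity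
    push_cast
    field_simp
    ring

theorem M_coeff_succ (r k : ℕ) : (MP r).coeff (k + 1) * (k + 1)
    = - (2 * (2 * (r : ℝ) + 4)) * ((EY r).2.coeff k + 2 * (X ^ 2 * (EY r).2).coeff k) := by
  have h := congrArg (fun p => p.coeff k) (MP_deriv r)
  rw [add_mul, one_mul, mul_assoc, ← C_neg] at h
  simpa only [coeff_derivative, coeff_C_mul, coeff_add, coeff_ofNat_mul] using h

theorem M_zero (r : ℕ) : (MP r).coeff 0 = 1 := by
  have hE : (EY r).1.coeff 0 = 1 := by
    have h := congrArg (fun p => p.coeff 0) (EY_deriv r).1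
    simp only [coeff_derivative] at h
    rw [← h]; simp [(Y_zero r).2]
  simp [MP, mul_coeff_zero, hE]

theorem M_odd (r k : ℕ) : (MP r).coeff (2 * k + 1) = 0 := by
  have h := M_coeff_succ r (2 * k)
  have : (X ^ 2 * (EY r).2).coeff (2 * k) = 0 := by
    rcases k with _ | k
    · simp [mul_coeff_zero]
    · rw [show 2 * (k + 1) = 2 * k + 2 by ring, coeff_X_pow_mul, Y_even]
  rw [this, Y_even] at h
  simp only [mul_zero, add_zero] at h
  refine (mul_eq_zero.1 h).resolve_right ?_
  positivity

theorem M_even (r k : ℕ) : ceven (2 * r + 4) k = (((MP r).coeff (2 * k) : ℝ) : ℂ) := by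
  rcases k with _ | _ | k
  · simp [ceven, M_zero]
  · have h := M_coeff_succ r 1
    have h2 : (X ^ 2 * (EY r).2).coeff 1 = 0 := by simp [coeff_X_pow_mul']
    rw [h2, (Y_zero r).2] at h
    have : (MP r).coeff (2 * 1) = -(2 * r + 4) := by
      norm_num at h ⊢
      linarith
    simp only [zero_add]
    rw [this]; simp [ceven]
  · have h := M_coeff_succ r (2 * (k + 1) + 1)
    rw [show 2 * (k + 1) + 1 = 2 * k + 1 + 2 by ring, coeff_X_pow_mul,
      show 2 * k + 1 + 2 = 2 * (k + 1) + 1 by ring, Y_odd, Y_odd,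
      Finset.prod_Icc_succ_top (by omega)] at h
    have hne : (((2 * (k + 1) + 1 : ℕ) : ℝ) + 1) ≠ 0 := by positivity
    have h' := eq_div_of_mul_eq hne h
    rw [show 2 * (k + 1 + 1) = 2 * (k + 1) + 1 + 1 by ring, h']
    have hc : ceven (2 * r + 4) (k + 1 + 1) = (((-1) ^ (k + 2) * 2 ^ (k + 2) * (2 * (r : ℝ) + 4)
        * ((2 * (r : ℝ) + 4) - ((2 * ((k : ℝ) + 2) - 1) ^ 2 + 1)) *
        (∏ j ∈ Finset.Icc 1 k, ((2 * (r : ℝ) + 4) - 2 * (1 + (j : ℝ)))) /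
        (Nat.factorial (2 * k + 4) : ℝ) : ℝ) : ℂ) := by
      unfold ceven
      rw [if_neg (by omega), if_neg (by omega)]
      push_cast
      rw [show 2 * (k + 1 + 1) = 2 * k + 4 by ring,
        show (k : ℂ) + 1 + 1 = k + 2 by ring]
    rw [hc]
    congr 1
    rw [show 2 * k + 4 = 2 * k + 1 + 1 + 1 + 1 by ring, show 2 * (k + 1) + 1 = 2 * k + 1 + 1 + 1 by ring,
      Nat.factorial_succ (2 * k + 1 + 1 + 1), Nat.factorial_succ (2 * k + 1 + 1),
      Nat.factorial_succ (2 * k + 1)]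
    have : (Nat.factorial (2 * k + 1) : ℝ) ≠ 0 := by positivity
    generalize (∏ j ∈ Finset.Icc 1 k, ((2 * (r : ℝ) + 4) - 2 * (1 + (j : ℝ)))) = p
    rw [show ((-2 : ℝ)) ^ (k + 1) = (-1) ^ (k + 1) * 2 ^ (k + 1) by rw [← mul_pow]; norm_num,
      show ((-2 : ℝ)) ^ k = (-1) ^ k * 2 ^ k by rw [← mul_pow]; norm_num]
    push_cast
    field_simp
    ring

theorem muF_eq (r : ℕ) (x : ℝ) : muF (2 * r + 4) (x : ℂ) = (((MP r).eval x : ℝ) : ℂ) := by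
  unfold muF
  have hlt : (MP r).natDegree < 2 * ((MP r).natDegree + 1) := by omega
  rw [eval_eq_sum_range' hlt]
  rw [tsum_eq_sum (s := Finset.range ((MP r).natDegree + 1))]
  · have : ∀ N : ℕ, ∑ i ∈ Finset.range (2 * N), (MP r).coeff i * x ^ i
        = ∑ k ∈ Finset.range N, (MP r).coeff (2 * k) * x ^ (2 * k) := by
      intro N
      induction N with
      | zero => simp
      | succ N ih =>
        rw [show 2 * (N + 1) = 2 * N + 1 + 1 by ring, Finset.sum_range_succ, Finset.sum_range_succ,
          ih, Finset.sum_range_succ, M_odd]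
        ring
    rw [this]
    push_cast
    exact Finset.sum_congr rfl fun k _ => by rw [M_even]
  · intro k hk
    rw [Finset.mem_range] at hk
    rw [M_even, coeff_eq_zero_of_natDegree_lt (by omega)]
    simp

theorem int_zero :
    ∫ x : ℝ, Real.exp (-x ^ 2) / (1 + 2 * x ^ 2) ^ 2 = Real.sqrt Real.pi / 2 := by
  have i1 := aux_int_q (C 2) 2
  have i2 := aux_int_poly 1
  have key := MeasureTheory.integral_eq_zero_of_hasDerivAt_of_integrable
    (f := fun x : ℝ => (X : ℝ[X]).eval x * Real.exp (-x ^ 2) / (1 + 2 * x ^ 2) ^ 1)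
    (f' := fun x : ℝ => (C 2 : ℝ[X]).eval x * Real.exp (-x ^ 2) / (1 + 2 * x ^ 2) ^ 2
      - (1 : ℝ[X]).eval x * Real.exp (-x ^ 2))
    (fun x => by
      have hq : HasDerivAt (fun x : ℝ => (1 + 2 * x ^ 2) ^ 1) (4 * x) x := by
        have := ((hasDerivAt_pow 2 x).const_mul 2).const_add 1
        simp only [pow_one]
        refine this.congr_deriv ?_
        norm_num
        ring
      have hne : (1 + 2 * x ^ 2) ^ 1 ≠ 0 := by positivity
      have hne' : (1 + 2 * x ^ 2) ≠ 0 := by positivity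
      have := (((X : ℝ[X]).hasDerivAt x).mul (aux_hasDeriv_exp x)).div hq hne
      refine this.congr_deriv ?_
      simp only [derivative_X, eval_one, eval_X, eval_C, Pi.mul_apply]
      field_simp
      ring)
    (i1.sub i2) (aux_int_q _ 1)
  rw [MeasureTheory.integral_sub i1 i2] at key
  have h1 := gI_one
  unfold gI at h1
  rw [h1] at key
  simp only [eval_C, mul_div_assoc] at key
  rw [MeasureTheory.integral_const_mul] at key
  linarith

theorem muF_zero (z : ℂ) : muF 0 z = 1 := by
  unfold muF
  rw [tsum_eq_single 0]
  · simp [ceven]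
  · intro k hk
    simp [ceven, hk]

theorem stmt17 :
    (∀ m n : ℕ, Even m → Even n → 4 ≤ m → 4 ≤ n →
      ∫ x : ℝ, muF m (x : ℂ) * muF n (x : ℂ) *
          Complex.exp (-(x : ℂ) ^ 2) / (1 + 2 * (x : ℂ) ^ 2) ^ 2
        = if m = n then
            ((Real.sqrt Real.pi * (n : ℝ) * (((n : ℝ) - 1) * ((n : ℝ) - 2)) *
              (∏ j ∈ Finset.Icc 1 ((n - 4) / 2), ((n : ℝ) - 2 * (1 + (j : ℝ)))) ^ 2 /
                (Nat.factorial (n - 1) : ℝ) : ℝ) : ℂ)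
          else 0) ∧
    (∫ x : ℝ, (muF 0 (x : ℂ)) ^ 2 * Complex.exp (-(x : ℂ) ^ 2) / (1 + 2 * (x : ℂ) ^ 2) ^ 2
      = ((Real.sqrt Real.pi / 2 : ℝ) : ℂ)) := by
  constructor
  · intro m n hm hn h4m h4n
    obtain ⟨r, rfl⟩ : ∃ r, m = 2 * r + 4 := by
      obtain ⟨a, rfl⟩ := hm
      exact ⟨a - 2, by omega⟩
    obtain ⟨s, rfl⟩ : ∃ s, n = 2 * s + 4 := by
      obtain ⟨a, rfl⟩ := hn
      exact ⟨a - 2, by omega⟩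
    have e : ∀ x : ℝ, muF (2 * r + 4) (x : ℂ) * muF (2 * s + 4) (x : ℂ) *
          Complex.exp (-(x : ℂ) ^ 2) / (1 + 2 * (x : ℂ) ^ 2) ^ 2
        = (((MP r).eval x * (MP s).eval x * Real.exp (-x ^ 2) / (1 + 2 * x ^ 2) ^ 2 : ℝ) : ℂ) := by
      intro x
      rw [muF_eq, muF_eq]
      push_cast
      rfl
    simp_rw [e]
    rw [integral_complex_ofReal, real_int]
    split_ifs with h
    · obtain rfl : r = s := by omega
      congr 1
      rw [← pow_two, gI_YY_closed, show (2 * r + 4 - 4) / 2 = r by omega,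
        show 2 * r + 4 - 1 = 2 * r + 3 by omega]
      push_cast
      have : (Nat.factorial (2 * r + 3) : ℝ) ≠ 0 := by positivity
      field_simp
      ring
    · rw [gI_orth r s (by rintro rfl; exact h rfl)]
      simp
  · rw [← int_zero, ← integral_complex_ofReal]
    congr 1
    ext x
    rw [muF_zero]
    push_cast
    simp
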